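/- arXiv:2506.05251 — 2 statements merged into one kernel-verified Lean document; each statement's English description precedes it below -/
import Mathlib

section
/- Let {U(S)} be the NTU LP game given by A, {b^i}, and {v^i} on a finite nonempty player set N, with each X({i}) nonempty and bounded. If for every i ∈ N the valuation v^i lies in the dual cone X*(S) for every nonempty coalition S ⊆ N, then the core C(N) is nonempty. -/
open Finset

/-- The design space `X(S)` of a coalition `S` in an NTU LP game. -/
def designSpace {K J N : Type*} [Fintype J] (A : K → J → ℝ) (b : N → K → ℝ)
    (S : Finset N) : Set (J → ℝ) :=
  {x | (∀ j, 0 ≤ x j) ∧ ∀ k, (∑ j, A k j * x j) ≤ ∑ i ∈ S, b i k}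

/-- The utility space `U(S)` of a coalition `S`. -/
def utilitySpace {K J N : Type*} [Fintype J] (A : K → J → ℝ) (b : N → K → ℝ)
    (v : N → J → ℝ) (S : Finset N) : Set (N → ℝ) :=
  {u | ∃ x ∈ designSpace A b S, ∀ i ∈ S, u i ≤ ∑ j, v i j * x j}

/-- The core `C(N) = U(N) \ ⋃_{∅ ≠ S ⊆ N} int U(S)` of an NTU LP game. -/
def core {K J N : Type*} [Fintype J] [Fintype N] (A : K → J → ℝ) (b : N → K → ℝ)
    (v : N → J → ℝ) : Set (N → ℝ) :=
  utilitySpace A b v Finset.univ \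
    ⋃ (S : Finset N) (_ : S.Nonempty), interior (utilitySpace A b v S)

/-- A set `σ` dominates when every element is, for one of the rankings, at most all of `σ`. -/
def Dominates {I E : Type*} (R : I → E → ℕ) (σ : Finset E) : Prop :=
  ∀ y, ∃ i, ∀ x ∈ σ, R i y ≤ R i x

theorem Dominates.mono {I E : Type*} {R : I → E → ℕ} {σ τ : Finset E}
    (h : Dominates R σ) (hτ : τ ⊆ σ) : Dominates R τ := fun y =>
  let ⟨i, hi⟩ := h y
  ⟨i, fun x hx => hi x (hτ hx)⟩

theorem Dominates.exists_pivot_index {I E : Type*} [Fintype I] [DecidableEq I] [DecidableEq E]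
    {R : I → E → ℕ} (hR : ∀ i, Function.Injective (R i)) {τ : Finset E} {x : E}
    (hx : x ∉ τ) (hcard : #τ + 1 = Fintype.card I) {μ : I → E}
    (hμ : ∀ i, μ i ∈ τ) (hmin : ∀ i, ∀ t ∈ τ, R i (μ i) ≤ R i t)
    (hdom : Dominates R (insert x τ)) :
    ∃ a, (∀ i, i ≠ a → R i (μ i) < R i x) ∧ R a x < R a (μ a) ∧
      Set.InjOn μ {i | i ≠ a} ∧
      (∀ t ∈ τ, ∃ i, i ≠ a ∧ μ i = t) ∧
      ∀ y, (∀ i, i ≠ a → R i (μ i) < R i y) → R a y ≤ R a x := by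
  obtain ⟨a, ha⟩ := hdom x
  have hlt : ∀ i, ∀ t ∈ τ, R i x ≤ R i t → R i x < R i t := fun i t ht h =>
    lt_of_le_of_ne h fun h' => hx (hR i h' ▸ ht)
  have hax : R a x < R a (μ a) := hlt a _ (hμ a) (ha _ (mem_insert_of_mem (hμ a)))
  have hex : ∀ t ∈ τ, ∃ i, i ≠ a ∧ μ i = t ∧ R i (μ i) < R i x := by
    intro t ht
    obtain ⟨i, hi⟩ := hdom t
    have hit : μ i = t := hR i (le_antisymm (hmin i t ht) (hi _ (mem_insert_of_mem (hμ i))))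
    have h2 : R i (μ i) < R i x := by
      rw [hit]
      exact lt_of_le_of_ne (hi x (mem_insert_self _ _)) fun h' => hx (hR i h' ▸ ht)
    refine ⟨i, ?_, hit, h2⟩
    rintro rfl
    omega
  have hcard' : #(univ.erase a) = #τ := by
    rw [card_erase_of_mem (mem_univ a), card_univ]; omega
  have hsurj : Set.SurjOn μ (univ.erase a : Finset I) τ := by
    intro t ht
    obtain ⟨i, hi, hit, _⟩ := hex t ht
    exact ⟨i, by simpa using hi, hit⟩
  have hinj : Set.InjOn μ (univ.erase a : Finset I) :=
    injOn_of_surjOn_of_card_le μ (fun i _ => hμ i) hsurj hcard'.le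
  have hinj' : Set.InjOn μ {i | i ≠ a} := fun i hi j hj h =>
    hinj (by simpa using hi) (by simpa using hj) h
  have hbig : ∀ i, i ≠ a → R i (μ i) < R i x := by
    intro i hi
    obtain ⟨j, hj, hji, h⟩ := hex _ (hμ i)
    rwa [← hinj' hj hi hji]
  refine ⟨a, hbig, hax, hinj', fun t ht => ?_, fun y hy => ?_⟩
  · obtain ⟨i, hi, hit, _⟩ := hex t ht
    exact ⟨i, hi, hit⟩
  · obtain ⟨i, hi⟩ := hdom y
    by_cases hia : i = a
    · subst hia
      exact hi x (mem_insert_self _ _)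
    · have := hi _ (mem_insert_of_mem (hμ i))
      have := hy i hia
      omega

theorem Dominates.insert_of_maximal {I E : Type*} [DecidableEq E]
    {R : I → E → ℕ} {τ : Finset E} {x : E} {μ : I → E} {a : I}
    (hμ : ∀ i, μ i ∈ τ) (hmin : ∀ i, ∀ t ∈ τ, R i (μ i) ≤ R i t) (hτ : Dominates R τ)
    (hx : ∀ i, i ≠ a → R i (μ i) < R i x)
    (hmax : ∀ y, (∀ i, i ≠ a → R i (μ i) < R i y) → R a y ≤ R a x) :
    Dominates R (insert x τ) := by
  intro y
  by_cases hy : ∀ i, i ≠ a → R i (μ i) < R i y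
  · refine ⟨a, fun z hz => ?_⟩
    obtain rfl | hz := mem_insert.1 hz
    · exact hmax y hy
    · obtain ⟨i, hi⟩ := hτ y
      by_cases hia : i = a
      · subst hia
        exact hi z hz
      · have := hy i hia
        have := hi _ (hμ i)
        omega
  · push Not at hy
    obtain ⟨i, hia, hi⟩ := hy
    refine ⟨i, fun z hz => ?_⟩
    obtain rfl | hz := mem_insert.1 hz
    · exact hi.trans (hx i hia).le
    · exact hi.trans (hmin i z hz)

open Classical in
theorem even_card_dominating_supersets {I E : Type*} [Fintype I] [Fintype E]
    {R : I → E → ℕ} (hR : ∀ i, Function.Injective (R i)) {τ : Finset E}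
    (hne : τ.Nonempty) (hcard : #τ + 1 = Fintype.card I)
    (hout : ∀ b, ∃ y, ∀ i, i ≠ b → ∃ t ∈ τ, R i t < R i y) :
    Even #{σ : Finset E | (#σ = Fintype.card I ∧ Dominates R σ) ∧ τ ⊆ σ} := by
  obtain hemp | ⟨σ, hσ⟩ := (filter (fun σ : Finset E =>
    (#σ = Fintype.card I ∧ Dominates R σ) ∧ τ ⊆ σ) univ).eq_empty_or_nonempty
  · simp [hemp]
  obtain ⟨-, ⟨hσc, hσd⟩, hτσ⟩ := mem_filter.1 hσ
  choose μ hμ hmin using fun i => exists_min_image τ (R i) hne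
  have hτd : Dominates R τ := hσd.mono hτσ
  obtain ⟨x, hx, rfl⟩ := exists_eq_insert_iff.2 ⟨hτσ, hcard.trans hσc.symm⟩
  obtain ⟨a, hxa, hax, hinj, hsurj, hmaxa⟩ :=
    hσd.exists_pivot_index hR hx hcard hμ hmin
  obtain ⟨b, hba, hμb⟩ := hsurj _ (hμ a)
  obtain ⟨z, hz, hzmax⟩ := exists_max_image
    (univ.filter fun y => ∀ i, i ≠ b → R i (μ i) < R i y) (R b) (by
      obtain ⟨y, hy⟩ := hout b
      refine ⟨y, mem_filter.2 ⟨mem_univ _, fun i hi => ?_⟩⟩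
      obtain ⟨t, ht, hty⟩ := hy i hi
      exact (hmin i t ht).trans_lt hty)
  have hzb : ∀ i, i ≠ b → R i (μ i) < R i z := (mem_filter.1 hz).2
  have hmaxb : ∀ y, (∀ i, i ≠ b → R i (μ i) < R i y) → R b y ≤ R b z :=
    fun y hy => hzmax y (mem_filter.2 ⟨mem_univ _, hy⟩)
  have hzτ : z ∉ τ := by
    intro h
    obtain ⟨i, hi, hit⟩ := hsurj z h
    by_cases hib : i = b
    · have := hzb a hba.symm
      rw [← hμb, ← hib, hit] at this
      omega
    · have := hzb i hib
      rw [hit] at this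
      omega
  have hxz : x ≠ z := by
    rintro rfl
    have := hzb a hba.symm
    omega
  have hins : insert x τ ≠ insert z τ := by
    intro h
    have : x ∈ insert z τ := h ▸ mem_insert_self _ _
    simp [hxz, hx] at this
  have : filter (fun σ : Finset E => (#σ = Fintype.card I ∧ Dominates R σ) ∧ τ ⊆ σ) univ
      = {insert x τ, insert z τ} := by
    ext ρ
    simp only [mem_filter, mem_univ, true_and, mem_insert, mem_singleton]
    constructor
    · rintro ⟨⟨hρc, hρd⟩, hτρ⟩
      obtain ⟨w, hw, rfl⟩ := exists_eq_insert_iff.2 ⟨hτρ, hcard.trans hρc.symm⟩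
      obtain ⟨e, hwe, hew, -, hsurje, hmaxe⟩ := hρd.exists_pivot_index hR hw hcard hμ hmin
      by_cases hea : e = a
      · subst hea
        left
        rw [hR e (le_antisymm (hmaxa w hwe) (hmaxe x hxa))]
      · right
        obtain ⟨i, hie, hi⟩ := hsurje _ (hμ e)
        have heb : e = b := by
          by_cases hia : i = a
          · subst hia
            exact hinj hea hba (hi.symm.trans hμb.symm)
          · exact absurd (hinj hia hea hi) hie
        subst heb
        rw [hR e (le_antisymm (hmaxb w hwe) (hmaxe z hzb))]
    · rintro (rfl | rfl)
      · exact ⟨⟨hσc, hσd⟩, hτσ⟩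
      · refine ⟨⟨by rw [card_insert_of_notMem hzτ, hcard], ?_⟩, subset_insert _ _⟩
        exact Dominates.insert_of_maximal hμ hmin hτd hzb hmaxb
  rw [this, card_pair hins]
  exact even_two

open Classical in
theorem even_card_almost_colorful {I E : Type*} [Fintype I] [Fintype E]
    (c : E → I) (k : I) {σ : Finset E} (hσ : #σ = Fintype.card I)
    (hcol : ∃ i, ∀ x ∈ σ, c x ≠ i) :
    Even #{τ : Finset E | (#τ + 1 = Fintype.card I ∧ τ.image c = univ.erase k) ∧ τ ⊆ σ} := by
  obtain hemp | ⟨τ, hτ⟩ := (filter (fun τ : Finset E =>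
    (#τ + 1 = Fintype.card I ∧ τ.image c = univ.erase k) ∧ τ ⊆ σ) univ).eq_empty_or_nonempty
  · simp [hemp]
  obtain ⟨-, ⟨hτc, hτi⟩, hτσ⟩ := mem_filter.1 hτ
  obtain ⟨x, hx, rfl⟩ := exists_eq_insert_iff.2 ⟨hτσ, hτc.trans hσ.symm⟩
  have hinj : Set.InjOn c τ := by
    apply card_image_iff.1
    rw [hτi, card_erase_of_mem (mem_univ k), card_univ]; omega
  have hmem : ∀ i, i ≠ k → ∃ t ∈ τ, c t = i := by
    intro i hi
    have : i ∈ τ.image c := by rw [hτi]; simpa using hi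
    simpa using this
  have hτk : ∀ t ∈ τ, c t ≠ k := by
    intro t ht
    have : c t ∈ τ.image c := mem_image_of_mem c ht
    rw [hτi] at this
    simpa using this
  have hxk : c x ≠ k := by
    rintro h
    obtain ⟨i, hi⟩ := hcol
    by_cases hik : i = k
    · exact hi x (mem_insert_self _ _) (h.trans hik.symm)
    · obtain ⟨t, ht, rfl⟩ := hmem i hik
      exact hi t (mem_insert_of_mem ht) rfl
  obtain ⟨z, hz, hzx⟩ := hmem _ hxk
  have hxz : x ≠ z := by rintro rfl; exact hx hz
  have himg : ((insert x τ).erase z).image c = univ.erase k := by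
    ext i
    simp only [mem_image, mem_erase, mem_insert, mem_univ, and_true]
    constructor
    · rintro ⟨t, ⟨-, rfl | ht⟩, rfl⟩
      · exact hxk
      · exact hτk t ht
    · intro hi
      obtain ⟨t, ht, rfl⟩ := hmem i hi
      by_cases htz : t = z
      · exact ⟨x, ⟨hxz, Or.inl rfl⟩, by rw [htz, hzx]⟩
      · exact ⟨t, ⟨htz, Or.inr ht⟩, rfl⟩
  have hzmem : z ∈ insert x τ := mem_insert_of_mem hz
  have : filter (fun τ' : Finset E => (#τ' + 1 = Fintype.card I ∧ τ'.image c = univ.erase k) ∧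
      τ' ⊆ insert x τ) univ = {τ, (insert x τ).erase z} := by
    ext ρ
    simp only [mem_filter, mem_univ, true_and, mem_insert, mem_singleton]
    constructor
    · rintro ⟨⟨hρc, hρi⟩, hρσ⟩
      obtain ⟨w, hw, hwρ⟩ := exists_eq_insert_iff.2 ⟨hρσ, hρc.trans hσ.symm⟩
      have hρ : ρ = (insert x τ).erase w := by rw [← hwρ, erase_insert hw]
      have hρinj : Set.InjOn c ρ := by
        apply card_image_iff.1
        rw [hρi, card_erase_of_mem (mem_univ k), card_univ]; omega
      by_cases hwx : w = x
      · left
        rw [hρ, hwx, erase_insert hx]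
      · right
        by_cases hwz : w = z
        · rw [hρ, hwz]
        · have h1 : x ∈ ρ := by rw [hρ]; simp [Ne.symm hwx]
          have h2 : z ∈ ρ := by rw [hρ]; simp [Ne.symm hwz, hz]
          exact absurd (hρinj h1 h2 hzx.symm) hxz
    · rintro (rfl | rfl)
      · exact ⟨⟨hτc, hτi⟩, hτσ⟩
      · refine ⟨⟨?_, himg⟩, erase_subset _ _⟩
        rw [card_erase_of_mem hzmem, hσ]; omega
  rw [this, card_pair]
  · exact even_two
  · intro h
    exact absurd (h ▸ hz) (notMem_erase z _)

open Classical in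
theorem exists_colorful_dominating_of_injective {I E : Type*} [Fintype I] [Nonempty I] [Fintype E]
    {R : I → E → ℕ} (hR : ∀ i, Function.Injective (R i)) (s : I → E) (c : E → I)
    (hc : ∀ i, c (s i) = i) (hmin : ∀ i e, R i (s i) ≤ R i e)
    (hmax : ∀ i j y, j ≠ i → y ∉ Set.range s → R i y < R i (s j))
    (hE : ∃ y, y ∉ Set.range s) :
    ∃ σ : Finset E, (∀ i, ∃ x ∈ σ, c x = i) ∧ Dominates R σ := by
  by_contra hcon
  push Not at hcon
  obtain ⟨k⟩ := ‹Nonempty I›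
  have hs : Function.Injective s := fun i j h => by rw [← hc i, h, hc]
  set rooms : Finset (Finset E) := {σ | #σ = Fintype.card I ∧ Dominates R σ} with hrooms
  set doors : Finset (Finset E) :=
    {τ | #τ + 1 = Fintype.card I ∧ τ.image c = univ.erase k} with hdoors
  have key := sum_card_bipartiteAbove_eq_sum_card_bipartiteBelow
    (s := doors) (t := rooms) (r := fun τ σ => τ ⊆ σ)
  have hright : Even (∑ σ ∈ rooms, #(bipartiteBelow (fun τ σ => τ ⊆ σ) doors σ)) := by
    refine even_iff_two_dvd.2 (dvd_sum fun σ hσ => even_iff_two_dvd.1 ?_)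
    obtain ⟨-, hσc, hσd⟩ := mem_filter.1 hσ
    have := even_card_almost_colorful c k hσc (by
      by_contra h
      push Not at h
      exact hcon σ h hσd)
    rwa [bipartiteBelow, hdoors, filter_filter]
  set τ₀ : Finset E := (univ.erase k).image s with hτ₀
  have hτ₀c : #τ₀ + 1 = Fintype.card I := by
    rw [hτ₀, card_image_of_injective _ hs, card_erase_add_one (mem_univ k), card_univ]
  have hmem₀ : ∀ x, x ∈ τ₀ ↔ ∃ i, i ≠ k ∧ s i = x := by simp [hτ₀]
  have hτ₀d : τ₀ ∈ doors := by
    refine mem_filter.2 ⟨mem_univ _, hτ₀c, ?_⟩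
    rw [hτ₀, image_image, show c ∘ s = id from funext hc, image_id]
  have hodd : #(bipartiteAbove (fun τ σ => τ ⊆ σ) rooms τ₀) = 1 := by
    obtain ⟨z, hz, hzmax⟩ := exists_max_image
      (univ.filter fun y => y ∉ Set.range s) (R k) (by
        obtain ⟨y, hy⟩ := hE
        exact ⟨y, mem_filter.2 ⟨mem_univ _, hy⟩⟩)
    have hzs : z ∉ Set.range s := (mem_filter.1 hz).2
    have hzτ : z ∉ τ₀ := fun h => by
      obtain ⟨i, -, hi⟩ := (hmem₀ z).1 h
      exact hzs ⟨i, hi⟩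
    refine card_eq_one.2 ⟨insert z τ₀, ?_⟩
    ext ρ
    simp only [bipartiteAbove, hrooms, mem_filter, mem_univ, true_and, mem_singleton]
    constructor
    · rintro ⟨⟨hρc, hρd⟩, hτρ⟩
      obtain ⟨x, hx, rfl⟩ := exists_eq_insert_iff.2 ⟨hτρ, hτ₀c.trans hρc.symm⟩
      have hle : ∀ y, y ∉ Set.range s → s k ∉ insert x τ₀ ∧ R k y ≤ R k x := by
        intro y hy
        obtain ⟨i, hi⟩ := hρd y
        have hsi : s i ∉ insert x τ₀ := fun h =>
          hy ⟨i, hR i (le_antisymm (hmin i y) (hi _ h))⟩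
        have hik : i = k := by
          by_contra hik
          exact hsi (mem_insert_of_mem ((hmem₀ _).2 ⟨i, hik, rfl⟩))
        subst hik
        exact ⟨hsi, hi x (mem_insert_self _ _)⟩
      have hxs : x ∉ Set.range s := by
        rintro ⟨i, rfl⟩
        by_cases hik : i = k
        · subst hik
          exact (hle z hzs).1 (mem_insert_self _ _)
        · exact hx ((hmem₀ _).2 ⟨i, hik, rfl⟩)
      rw [hR k (le_antisymm (hzmax x (mem_filter.2 ⟨mem_univ _, hxs⟩)) (hle z hzs).2)]
    · rintro rfl
      refine ⟨⟨by rw [card_insert_of_notMem hzτ, hτ₀c], fun y => ?_⟩, subset_insert _ _⟩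
      by_cases hy : y ∈ Set.range s
      · obtain ⟨i, rfl⟩ := hy
        exact ⟨i, fun x _ => hmin i x⟩
      · refine ⟨k, fun x hx => ?_⟩
        obtain rfl | hx := mem_insert.1 hx
        · exact hzmax y (mem_filter.2 ⟨mem_univ _, hy⟩)
        · obtain ⟨i, hi, rfl⟩ := (hmem₀ x).1 hx
          exact (hmax k i y hi hy).le
  have heven : Even (∑ τ ∈ doors.erase τ₀, #(bipartiteAbove (fun τ σ => τ ⊆ σ) rooms τ)) := by
    refine even_iff_two_dvd.2 (dvd_sum fun τ hτ => even_iff_two_dvd.1 ?_)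
    obtain ⟨hττ₀, hτd⟩ := mem_erase.1 hτ
    obtain ⟨-, hτc, hτi⟩ := mem_filter.1 hτd
    have hex : ∃ y ∈ τ, y ∉ Set.range s := by
      by_contra h
      push Not at h
      refine hττ₀ (eq_of_subset_of_card_le (fun x hx => ?_) (by omega))
      obtain ⟨i, rfl⟩ := h x hx
      refine (hmem₀ _).2 ⟨i, ?_, rfl⟩
      have : c (s i) ∈ τ.image c := mem_image_of_mem c hx
      rw [hτi, hc] at this
      simpa using this
    obtain ⟨y, hy, hys⟩ := hex
    have := even_card_dominating_supersets hR ⟨y, hy⟩ hτc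
      (fun b => ⟨s b, fun i hi => ⟨y, hy, hmax i b y hi.symm hys⟩⟩)
    rwa [bipartiteAbove, hrooms, filter_filter]
  rw [← add_sum_erase _ _ hτ₀d, hodd] at key
  rw [← key] at hright
  obtain ⟨p, hp⟩ := hright
  obtain ⟨q, hq⟩ := heven
  omega

theorem exists_colorful_dominating {I E : Type*} [Fintype I] [Nonempty I] [Fintype E]
    {R : I → E → ℕ} (s : I → E) (c : E → I)
    (hc : ∀ i, c (s i) = i) (hmin : ∀ i e, e ≠ s i → R i (s i) < R i e)
    (hmax : ∀ i j y, j ≠ i → y ∉ Set.range s → R i y < R i (s j))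
    (hE : ∃ y, y ∉ Set.range s) :
    ∃ σ : Finset E, (∀ i, ∃ x ∈ σ, c x = i) ∧ Dominates R σ := by
  set n := Fintype.card E
  let idx := Fintype.equivFin E
  have hlt : ∀ i e e', R i e < R i e' → R i e * n + idx e < R i e' * n + idx e' := by
    intro i e e' h
    have h1 : (R i e + 1) * n ≤ R i e' * n := Nat.mul_le_mul_right _ h
    have h2 : (idx e : ℕ) < n := (idx e).2
    rw [add_mul] at h1
    omega
  obtain ⟨σ, h1, h2⟩ := exists_colorful_dominating_of_injective
    (R := fun i e => R i e * n + idx e) (fun i e e' h => by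
      obtain h' | h' | h' := lt_trichotomy (R i e) (R i e')
      · exact absurd h (hlt i e e' h').ne
      · exact idx.injective (Fin.ext (by simpa [h'] using h))
      · exact absurd h (hlt i e' e h').ne') s c hc
    (fun i e => by
      by_cases he : e = s i
      · rw [he]
      · exact (hlt i _ _ (hmin i e he)).le)
    (fun i j y hj hy => hlt i _ _ (hmax i j y hj hy)) hE
  refine ⟨σ, h1, fun y => ?_⟩
  obtain ⟨i, hi⟩ := h2 y
  exact ⟨i, fun x hx => not_lt.1 fun h => absurd (hi x hx) (hlt i _ _ h).not_ge⟩

theorem le_add_card_of_forall_exists_le {I : Type*} [Fintype I] {m : ℕ} {D : Finset (I → ℕ)}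
    (hD : ∀ x ∈ D, ∑ i, x i = m) {C : Finset I} (hC : C.Nonempty)
    (hdom : ∀ y : I → ℕ, ∑ i, y i = m → ∃ i ∈ C, ∀ x ∈ D, y i ≤ x i) {x : I → ℕ} (hx : x ∈ D) :
    (∀ k ∉ C, x k ≤ Fintype.card I) ∧ ∀ x' ∈ D, ∀ k, x k ≤ x' k + Fintype.card I := by
  classical
  choose μ hμ hmin using fun i => exists_min_image D (fun x => x i) ⟨x, hx⟩
  have hbig : m < ∑ i ∈ C, (μ i i + 1) := by
    by_contra! h
    obtain ⟨a, ha⟩ := hC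
    have hsum : ∑ i, ((if i ∈ C then μ i i + 1 else 0) +
        if i = a then m - ∑ i ∈ C, (μ i i + 1) else 0) = m := by
      rw [sum_add_distrib, sum_ite_eq' univ a, if_pos (mem_univ a), sum_ite_mem, univ_inter]
      omega
    obtain ⟨i, hi, hle⟩ := hdom _ hsum
    have := hle _ (hμ i)
    rw [if_pos hi] at this
    omega
  rw [sum_add_distrib, sum_const, smul_eq_mul, mul_one] at hbig
  have hCI : #C ≤ Fintype.card I := card_le_univ C
  have hout : ∀ y ∈ D, ∀ k ∉ C, y k ≤ Fintype.card I := by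
    intro y hy k hk
    have h1 : ∑ i ∈ C, μ i i ≤ ∑ i ∈ C, y i := sum_le_sum fun i _ => hmin i y hy
    have h2 : ∑ i ∈ insert k C, y i ≤ ∑ i, y i := sum_le_sum_of_subset (subset_univ _)
    rw [sum_insert hk, hD y hy] at h2
    omega
  refine ⟨hout x hx, fun x' hx' k => ?_⟩
  by_cases hk : k ∈ C
  · have h1 : ∑ i ∈ C.erase k, μ i i ≤ ∑ i ∈ C.erase k, x i :=
      sum_le_sum fun i _ => hmin i x hx
    have h2 : ∑ i ∈ C, x i ≤ ∑ i, x i := sum_le_sum_of_subset (subset_univ _)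
    rw [← add_sum_erase _ _ hk, hD x hx] at h2
    rw [← add_sum_erase _ _ hk] at hbig
    have := hmin k x' hx'
    omega
  · have := hout x hx k hk
    omega

theorem exists_approx_complementary {I : Type*} [Fintype I] [Nonempty I]
    (g : (I → ℝ) → I → ℝ) {m : ℕ} (hm : 0 < m) :
    ∃ x ∈ stdSimplex ℝ I, ∀ i, x i ≤ Fintype.card I / m ∨
      ∃ x' ∈ stdSimplex ℝ I, dist x' x ≤ Fintype.card I / m ∧ ∀ j, g x' i ≤ g x' j := by
  classical
  have hm' : (0 : ℝ) < m := Nat.cast_pos.2 hm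
  let M := {x : I → Fin (m + 1) // ∑ i, (x i : ℕ) = m}
  let p : (I → ℕ) → I → ℝ := fun x i => x i / m
  have hp : ∀ x : I → ℕ, ∑ i, x i = m → p x ∈ stdSimplex ℝ I := by
    intro x hx
    refine ⟨fun i => by positivity, ?_⟩
    simp only [p]
    rw [← sum_div, ← Nat.cast_sum, hx, div_self hm'.ne']
  choose c hc using fun x : I → ℝ => exists_min_image univ (g x) univ_nonempty
  let R : I → M ⊕ I → ℕ := fun i =>
    Sum.elim (fun x => x.1 i + 1) fun j => if j = i then 0 else m + 2
  let col : M ⊕ I → I := Sum.elim (fun x => c (p fun i => x.1 i)) id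
  have hlift : ∀ y : I → ℕ, ∑ i, y i = m → ∃ x : M, ∀ i, (x.1 i : ℕ) = y i := by
    intro y hy
    have hle : ∀ i, y i < m + 1 := fun i =>
      Nat.lt_succ_of_le (hy ▸ single_le_sum (fun _ _ => Nat.zero_le _) (mem_univ i))
    exact ⟨⟨fun i => ⟨y i, hle i⟩, hy⟩, fun i => rfl⟩
  obtain ⟨σ, hσc, hσd⟩ := exists_colorful_dominating (R := R) Sum.inr col (fun i => rfl)
    (by
      rintro i (x | j) h
      · simp [R]
      · have : j ≠ i := fun h' => h (h' ▸ rfl)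
        simp [R, this])
    (by
      rintro i j (x | k) hj hy
      · have := (x.1 i).2
        simp only [R, Sum.elim_inl, Sum.elim_inr, if_neg hj]
        omega
      · exact absurd ⟨k, rfl⟩ hy)
    (by
      obtain ⟨a⟩ := ‹Nonempty I›
      obtain ⟨x, -⟩ := hlift (fun i => if i = a then m else 0) (by simp)
      exact ⟨Sum.inl x, by simp⟩)
  let D : Finset (I → ℕ) := σ.toLeft.image fun x i => (x.1 i : ℕ)
  let C : Finset I := univ.filter fun i => Sum.inr i ∉ σ
  have hD : ∀ x ∈ D, ∑ i, x i = m := by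
    intro x hx
    obtain ⟨z, -, rfl⟩ := mem_image.1 hx
    exact z.2
  have hdom : ∀ y : I → ℕ, ∑ i, y i = m → ∃ i ∈ C, ∀ x ∈ D, y i ≤ x i := by
    intro y hy
    obtain ⟨z, hz⟩ := hlift y hy
    obtain ⟨i, hi⟩ := hσd (Sum.inl z)
    refine ⟨i, mem_filter.2 ⟨mem_univ _, fun h => ?_⟩, fun x hx => ?_⟩
    · simpa [R] using hi _ h
    · obtain ⟨w, hw, rfl⟩ := mem_image.1 hx
      have := hi _ (mem_toLeft.1 hw)
      simp only [R, Sum.elim_inl, hz] at this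
      simpa using this
  have hcol : ∀ i ∈ C, ∃ x ∈ D, c (p x) = i := by
    intro i hi
    obtain ⟨x | j, hx, hxi⟩ := hσc i
    · exact ⟨_, mem_image.2 ⟨x, mem_toLeft.2 hx, rfl⟩, hxi⟩
    · obtain rfl : j = i := hxi
      exact absurd hx (mem_filter.1 hi).2
  have hCne : C.Nonempty := by
    obtain ⟨a⟩ := ‹Nonempty I›
    obtain ⟨i, hi, -⟩ := hdom (fun i => if i = a then m else 0) (by simp)
    exact ⟨i, hi⟩
  obtain ⟨a, ha⟩ := hCne
  obtain ⟨x, hx, -⟩ := hcol a ha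
  refine ⟨p x, hp x (hD x hx), fun i => ?_⟩
  by_cases hi : i ∈ C
  · right
    obtain ⟨x', hx', rfl⟩ := hcol i hi
    refine ⟨p x', hp x' (hD x' hx'), ?_, fun j => (hc (p x')).2 j (mem_univ j)⟩
    refine (dist_pi_le_iff (by positivity)).2 fun k => ?_
    have h1 := (le_add_card_of_forall_exists_le hD ⟨a, ha⟩ hdom hx).2 x' hx' k
    have h2 := (le_add_card_of_forall_exists_le hD ⟨a, ha⟩ hdom hx').2 x hx k
    have h1' : (x k : ℝ) ≤ x' k + Fintype.card I := by exact_mod_cast h1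
    have h2' : (x' k : ℝ) ≤ x k + Fintype.card I := by exact_mod_cast h2
    rw [Real.dist_eq, ← sub_div, abs_div, abs_of_pos hm']
    refine div_le_div_of_nonneg_right ?_ hm'.le
    rw [abs_le]
    constructor <;> linarith
  · left
    have := (le_add_card_of_forall_exists_le hD ⟨a, ha⟩ hdom hx).1 i hi
    exact div_le_div_of_nonneg_right (by exact_mod_cast this) hm'.le

/-- A continuous map on the standard simplex has a complementary point: every coordinate in the
support of the point minimizes the value of the map. -/
theorem exists_complementary_of_continuous {I : Type*} [Fintype I] [Nonempty I]
    {g : (I → ℝ) → I → ℝ} (hg : Continuous g) :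
    ∃ x ∈ stdSimplex ℝ I, ∀ i, 0 < x i → ∀ j, g x i ≤ g x j := by
  choose x hx h using fun m : ℕ => exists_approx_complementary g m.succ_pos
  obtain ⟨z, hz, φ, hφ, hlim⟩ := (isCompact_stdSimplex ℝ I).tendsto_subseq hx
  refine ⟨z, hz, fun i hi => ?_⟩
  have hclosed : IsClosed {y | ∀ j, g y i ≤ g y j} := by
    simp only [Set.ofPred_forall]
    exact isClosed_iInter fun j => isClosed_le (by fun_prop) (by fun_prop)
  change z ∈ {y | ∀ j, g y i ≤ g y j}
  rw [← hclosed.closure_eq, Metric.mem_closure_iff]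
  intro ε hε
  have hsmall : Filter.Tendsto (fun m : ℕ => (Fintype.card I : ℝ) / ((φ m).succ : ℕ))
      Filter.atTop (nhds 0) :=
    ((tendsto_const_div_atTop_nhds_zero_nat _).comp (Filter.tendsto_add_atTop_nat 1)).comp
      hφ.tendsto_atTop
  have hi' : Filter.Tendsto (fun m => x (φ m) i) Filter.atTop (nhds (z i)) :=
    ((continuous_apply i).tendsto z).comp hlim
  obtain ⟨m, h1, h2, h3, h4⟩ := ((hsmall.eventually_lt_const (half_pos hε)).and
    ((hsmall.eventually_lt_const (half_pos hi)).and
      ((hi'.eventually_const_lt (half_lt_self hi)).and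
        (Metric.tendsto_nhds.1 hlim _ (half_pos hε))))).exists
  obtain h5 | ⟨x', -, h5, h6⟩ := h (φ m) i
  · linarith
  · refine ⟨x', h6, ?_⟩
    rw [dist_comm]
    simp only [Function.comp] at h4
    linarith [dist_triangle x' (x (φ m)) z]

open Classical in
/-- **Scarf core theorem**. A balanced game with non-transferable utility has a core point. The game
is described by functions `h S`, where `h S u` is the largest `t` such that `u + t` is feasible
for the coalition `S`. -/
theorem exists_core_point_of_balanced {N : Type*} [Fintype N] [Nonempty N]
    {h : {S : Finset N // S.Nonempty} → (N → ℝ) → ℝ} (hcont : ∀ S, Continuous (h S))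
    (htrans : ∀ S u t, h S (fun i => u i + t) = h S u - t) {B : ℝ}
    (hB : ∀ S u, 0 ≤ h S u → ∀ i ∈ S.1, u i ≤ B)
    (hsingle : ∀ i u, -u i ≤ h ⟨{i}, singleton_nonempty i⟩ u)
    (hbal : ∀ w : {S : Finset N // S.Nonempty} → ℝ, (∀ S, 0 ≤ w S) →
      (∀ i, ∑ S, (if i ∈ S.1 then w S else 0) = 1) →
      ∀ u, (∀ S, 0 < w S → 0 ≤ h S u) → 0 ≤ h ⟨univ, univ_nonempty⟩ u) :
    ∃ u, 0 ≤ h ⟨univ, univ_nonempty⟩ u ∧ ∀ S, h S u ≤ 0 := by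
  classical
  have hP : (univ : Finset {S : Finset N // S.Nonempty}).Nonempty :=
    ⟨⟨univ, univ_nonempty⟩, mem_univ _⟩
  have hB0 : 0 ≤ B := by
    obtain ⟨i⟩ := ‹Nonempty N›
    exact hB ⟨{i}, singleton_nonempty i⟩ 0 (by simpa using hsingle i 0) i (mem_singleton_self i)
  have hn : (0 : ℝ) < Fintype.card N := by exact_mod_cast Fintype.card_pos
  set L : ℝ := Fintype.card N * (B + 2) with hL
  have hL0 : 0 < L := by positivity
  let y : (N → ℝ) → N → ℝ := fun x i => -(L * x i)
  have hy : Continuous y := by fun_prop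
  let H : (N → ℝ) → ℝ := fun x => univ.sup' hP fun S => h S (y x)
  have hhy : ∀ S, Continuous fun x => h S (y x) := fun S => (hcont S).comp hy
  have hH : Continuous H := Continuous.finset_sup'_apply hP fun S _ => hhy S
  have hle : ∀ S x, h S (y x) ≤ H x := fun S x => le_sup' (fun S => h S (y x)) (mem_univ S)
  have happrox : ∀ ε : ℝ, 0 < ε → ε ≤ 1 → ∃ x ∈ stdSimplex ℝ N,
      -ε ≤ h ⟨univ, univ_nonempty⟩ (y x) - H x := by
    intro ε hε hε1
    let w : (N → ℝ) → {S : Finset N // S.Nonempty} → ℝ := fun x S => max 0 (h S (y x) - H x + ε)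
    have hw0 : ∀ x S, 0 ≤ w x S := fun x S => le_max_left _ _
    have hwpos : ∀ x S, 0 < w x S → 0 ≤ h S (fun i => y x i + (H x - ε)) := by
      intro x S hS
      rw [htrans]
      obtain h0 | h0 := lt_max_iff.1 hS
      · exact absurd h0 (lt_irrefl _)
      · linarith
    let g : (N → ℝ) → N → ℝ := fun x i => ∑ S, if i ∈ S.1 then w x S else 0
    have hg : Continuous g := by
      refine continuous_pi fun i => continuous_finsetSum _ fun S _ => ?_
      by_cases hi : i ∈ S.1
      · simp only [hi, if_true]
        exact continuous_const.max (((hhy S).sub hH).add continuous_const)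
      · simp only [hi, if_false]
        exact continuous_const
    obtain ⟨x, hx, hcomp⟩ := exists_complementary_of_continuous hg
    have hterm : ∀ i S, 0 ≤ if i ∈ S.1 then w x S else 0 := fun i S => by
      split_ifs
      exacts [hw0 x S, le_rfl]
    obtain ⟨j, hj⟩ : ∃ j, 1 ≤ Fintype.card N * x j := by
      by_contra! hlt
      have := sum_lt_sum_of_nonempty (univ_nonempty (α := N)) fun i _ => hlt i
      rw [← mul_sum, hx.2, sum_const, card_univ, nsmul_eq_mul] at this
      exact lt_irrefl _ this
    have hHx : B + 2 ≤ H x := by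
      have h1 := (hsingle j (y x)).trans (hle _ x)
      simp only [y, neg_neg, hL] at h1
      nlinarith
    have hxpos : ∀ i, 0 < g x i → 0 < x i := by
      intro i hi
      obtain ⟨S, -, hS⟩ := exists_lt_of_sum_lt (s := univ) (f := fun _ => (0 : ℝ))
        (by simpa using hi)
      split_ifs at hS with hiS
      · have h1 := hB S _ (hwpos x S hS) i hiS
        refine lt_of_le_of_ne (hx.1 i) fun h0 => ?_
        simp only [y, ← h0] at h1
        linarith
      · exact absurd hS (lt_irrefl _)
    obtain ⟨T, -, hT⟩ := exists_mem_eq_sup' hP fun S => h S (y x)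
    have hwT : 0 < w x T := lt_max_of_lt_right (by
      have : H x = h T (y x) := hT
      linarith)
    obtain ⟨a, ha⟩ := T.2
    have hga : 0 < g x a := by
      refine sum_pos' (fun S _ => hterm a S) ⟨T, mem_univ _, ?_⟩
      rwa [if_pos ha]
    have hall : ∀ i, 0 < x i := by
      intro i
      refine hxpos i (hga.trans_le (hcomp a (hxpos a hga) i))
    have heq : ∀ i, g x i = g x a := fun i =>
      le_antisymm (hcomp i (hall i) a) (hcomp a (hall a) i)
    have := hbal (fun S => w x S / g x a) (fun S => div_nonneg (hw0 x S) hga.le) (fun i => by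
        have h1 : ∀ S : {S : Finset N // S.Nonempty}, (if i ∈ S.1 then w x S / g x a else 0) =
            (if i ∈ S.1 then w x S else 0) / g x a := fun S => by split_ifs <;> simp
        simp only [h1]
        rw [← sum_div, div_eq_one_iff_eq hga.ne']
        exact heq i)
      (fun i => y x i + (H x - ε)) (fun S hS => hwpos x S (by
        by_contra h0
        have h1 : w x S = 0 := le_antisymm (not_lt.1 h0) (hw0 x S)
        simp [h1] at hS))
    rw [htrans] at this
    exact ⟨x, hx, by linarith⟩
  obtain ⟨x₁, hx₁, -⟩ := happrox 1 one_pos le_rfl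
  obtain ⟨x, hx, hmax⟩ := (isCompact_stdSimplex ℝ N).exists_isMaxOn ⟨x₁, hx₁⟩
    ((hhy ⟨univ, univ_nonempty⟩).sub hH).continuousOn
  refine ⟨fun i => y x i + H x, ?_, fun S => ?_⟩
  · rw [htrans]
    refine le_of_forall_pos_le_add fun ε hε => ?_
    obtain ⟨z, hz, hzε⟩ := happrox (min ε 1) (lt_min hε one_pos) (min_le_right _ _)
    have h1 : h ⟨univ, univ_nonempty⟩ (y z) - H z ≤ h ⟨univ, univ_nonempty⟩ (y x) - H x := hmax hz
    linarith [min_le_left ε 1]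
  · rw [htrans]
    linarith [hle S x]

theorem isClosed_designSpace {K J N : Type*} [Fintype J] (A : K → J → ℝ) (b : N → K → ℝ)
    (S : Finset N) : IsClosed (designSpace A b S) := by
  simp only [designSpace, Set.ofPred_and, Set.ofPred_forall]
  exact (isClosed_iInter fun j => isClosed_le continuous_const (by fun_prop)).inter
    (isClosed_iInter fun k => isClosed_le (by fun_prop) continuous_const)

theorem isBounded_designSpace {K J N : Type*} [Fintype J] [Fintype K]
    {A : K → J → ℝ} {b : N → K → ℝ} {T : Finset N} (hne : (designSpace A b T).Nonempty)
    (hbd : Bornology.IsBounded (designSpace A b T)) (S : Finset N) :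
    Bornology.IsBounded (designSpace A b S) := by
  have hrec : ∀ d : J → ℝ, (∀ j, 0 ≤ d j) → (∀ k, ∑ j, A k j * d j ≤ 0) → d = 0 := by
    intro d hd0 hd
    obtain ⟨x, hx0, hx⟩ := hne
    obtain ⟨C, hC⟩ := hbd.exists_norm_le
    by_contra hdne
    have hdpos : 0 < ‖d‖ := norm_pos_iff.2 hdne
    have hmem : ∀ t : ℝ, 0 ≤ t → x + t • d ∈ designSpace A b T := by
      intro t ht
      refine ⟨fun j => add_nonneg (hx0 j) (mul_nonneg ht (hd0 j)), fun k => ?_⟩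
      simp only [Pi.add_apply, Pi.smul_apply, smul_eq_mul, mul_add, sum_add_distrib]
      have h1 : ∑ j, A k j * (t * d j) = t * ∑ j, A k j * d j := by
        rw [mul_sum]
        exact sum_congr rfl fun j _ => by ring
      rw [h1]
      linarith [hx k, mul_nonpos_of_nonneg_of_nonpos ht (hd k)]
    have hC0 : 0 ≤ C := (norm_nonneg _).trans (hC _ (hmem 0 le_rfl))
    set t := (C + ‖x‖ + 1) / ‖d‖ with ht
    have ht0 : 0 ≤ t := by positivity
    have h1 := hC _ (hmem t ht0)
    have h2 : ‖t • d‖ = C + ‖x‖ + 1 := by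
      rw [norm_smul, Real.norm_of_nonneg ht0, ht, div_mul_cancel₀ _ hdpos.ne']
    have h3 := norm_sub_le (x + t • d) x
    rw [add_sub_cancel_left, h2] at h3
    linarith
  let F : (J → ℝ) → ℝ := fun d => ∑ k, max 0 (∑ j, A k j * d j)
  have hF : Continuous F := by fun_prop
  obtain ⟨δ, hδ, hFδ⟩ := (isCompact_stdSimplex ℝ J).exists_forall_le' hF.continuousOn (a := 0) (by
    intro d hd
    by_contra h0
    have h1 : F d = 0 := le_antisymm (not_lt.1 h0) (sum_nonneg fun k _ => le_max_left _ _)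
    rw [sum_eq_zero_iff_of_nonneg fun k _ => le_max_left _ _] at h1
    have h2 := hrec d hd.1 fun k => (le_max_right 0 _).trans (h1 k (mem_univ k)).le
    have h3 := hd.2
    simp [h2] at h3)
  set β := ∑ k, max 0 (∑ i ∈ S, b i k) with hβ
  have hβ0 : 0 ≤ β := sum_nonneg fun k _ => le_max_left _ _
  refine (Metric.isBounded_Icc (0 : J → ℝ) fun _ => β / δ).subset fun y hy => ⟨hy.1, fun j => ?_⟩
  refine (single_le_sum (fun i _ => hy.1 i) (mem_univ j)).trans ?_
  obtain hs | hs := (sum_nonneg fun i _ => hy.1 i : 0 ≤ ∑ i, y i).eq_or_lt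
  · rw [← hs]
    positivity
  set s := ∑ i, y i with hsdef
  have hmem : (fun i => y i / s) ∈ stdSimplex ℝ J :=
    ⟨fun i => div_nonneg (hy.1 i) hs.le, by rw [← sum_div, div_self hs.ne']⟩
  have h1 := hFδ _ hmem
  have h2 : F (fun i => y i / s) ≤ β / s := by
    rw [hβ, sum_div]
    refine sum_le_sum fun k _ => max_le (by positivity) ?_
    simp only [← mul_div_assoc]
    rw [← sum_div]
    exact div_le_div_of_nonneg_right ((hy.2 k).trans (le_max_right _ _)) hs.le
  have h3 := h1.trans h2
  rw [le_div_iff₀ hs] at h3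
  rw [le_div_iff₀ hδ]
  linarith

theorem isCompact_designSpace {K J N : Type*} [Fintype J] [Fintype K]
    {A : K → J → ℝ} {b : N → K → ℝ} {T : Finset N} (hne : (designSpace A b T).Nonempty)
    (hbd : Bornology.IsBounded (designSpace A b T)) (S : Finset N) :
    IsCompact (designSpace A b S) :=
  Metric.isCompact_of_isClosed_isBounded (isClosed_designSpace A b S)
    (isBounded_designSpace hne hbd S)

theorem sum_mem_designSpace {K J N ι : Type*} [Fintype J]
    {A : K → J → ℝ} {b : N → K → ℝ} {s : Finset ι} {w : ι → ℝ} {T : ι → Finset N}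
    {x : ι → J → ℝ} {S : Finset N} (hw : ∀ a ∈ s, 0 ≤ w a)
    (hx : ∀ a ∈ s, x a ∈ designSpace A b (T a))
    (hb : ∀ k, ∑ a ∈ s, w a * ∑ i ∈ T a, b i k = ∑ i ∈ S, b i k) :
    (fun j => ∑ a ∈ s, w a * x a j) ∈ designSpace A b S := by
  refine ⟨fun j => sum_nonneg fun a ha => mul_nonneg (hw a ha) ((hx a ha).1 j), fun k => ?_⟩
  rw [← hb k]
  simp only [mul_sum]
  rw [sum_comm]
  refine sum_le_sum fun a ha => ?_
  rw [← mul_sum]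
  refine le_trans (le_of_eq ?_) (mul_le_mul_of_nonneg_left ((hx a ha).2 k) (hw a ha))
  rw [mul_sum]
  exact sum_congr rfl fun j _ => by ring

theorem designSpace_nonempty {K J N : Type*} [Fintype J] {A : K → J → ℝ} {b : N → K → ℝ}
    (hne : ∀ i : N, (designSpace A b {i}).Nonempty) (S : Finset N) :
    (designSpace A b S).Nonempty := by
  choose x hx using hne
  exact ⟨_, sum_mem_designSpace (s := S) (w := fun _ => 1) (fun _ _ => zero_le_one)
    (fun i _ => hx i) (by simp)⟩

theorem exists_slack_function {K J N : Type*} [Fintype J] {A : K → J → ℝ} {b : N → K → ℝ}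
    (v : N → J → ℝ) {S : Finset N} (hS : S.Nonempty) (hne : (designSpace A b S).Nonempty)
    (hcpt : IsCompact (designSpace A b S)) :
    ∃ h : (N → ℝ) → ℝ, Continuous h ∧
      ∀ u t, t ≤ h u ↔ (fun i => u i + t) ∈ utilitySpace A b v S := by
  let f : (N → ℝ) → (J → ℝ) → ℝ := fun u x => S.inf' hS fun i => ∑ j, v i j * x j - u i
  have hf : Continuous ↿f := Continuous.finset_inf'_apply hS fun i _ => by fun_prop
  refine ⟨fun u => sSup (f u '' designSpace A b S), hcpt.continuous_sSup hf, fun u t => ?_⟩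
  have hfu : ContinuousOn (f u) (designSpace A b S) :=
    (hf.comp (Continuous.prodMk_right u)).continuousOn
  have hiff : ∀ x, t ≤ f u x ↔ ∀ i ∈ S, u i + t ≤ ∑ j, v i j * x j := fun x => by
    simp only [f, le_inf'_iff, le_sub_iff_add_le']
  constructor
  · intro ht
    obtain ⟨x, hx, hxs⟩ := hcpt.exists_sSup_image_eq hne hfu
    exact ⟨x, hx, (hiff x).1 (ht.trans hxs.le)⟩
  · rintro ⟨x, hx, h⟩
    exact ((hiff x).2 h).trans (le_csSup (hcpt.bddAbove_image hfu) ⟨x, hx, rfl⟩)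

/-- If every `X({i})` is nonempty and bounded, and every valuation vector `vⁱ` lies in
the dual cone of `X(S)` for every nonempty coalition `S`, then the core is nonempty. -/
theorem ntulp_core_nonempty {K J N : Type*} [Fintype J] [Fintype K] [Fintype N]
    [Nonempty N]
    (A : K → J → ℝ) (b : N → K → ℝ) (v : N → J → ℝ)
    (hne : ∀ i : N, (designSpace A b {i}).Nonempty)
    (hbd : ∀ i : N, Bornology.IsBounded (designSpace A b {i}))
    (hv : ∀ i : N, ∀ S : Finset N, S.Nonempty →
      ∀ x ∈ designSpace A b S, 0 ≤ ∑ j, v i j * x j) :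
    (core A b v).Nonempty := by
  classical
  have hcpt : ∀ S : Finset N, IsCompact (designSpace A b S) := fun S =>
    have i := Classical.arbitrary N
    isCompact_designSpace (hne i) (hbd i) S
  choose h hcont hh using fun S : {S : Finset N // S.Nonempty} =>
    exists_slack_function v S.2 (designSpace_nonempty hne S.1) (hcpt S.1)
  have hh0 : ∀ S u, 0 ≤ h S u ↔ u ∈ utilitySpace A b v S.1 := fun S u => by
    simpa using hh S u 0
  have hbound : ∀ (S : Finset N) (i : N), ∃ B, ∀ x ∈ designSpace A b S, ∑ j, v i j * x j ≤ B :=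
    fun S i => by
      obtain ⟨B, hB⟩ := (hcpt S).bddAbove_image (f := fun x => ∑ j, v i j * x j)
        (by fun_prop)
      exact ⟨B, fun x hx => hB ⟨x, hx, rfl⟩⟩
  choose B hB using hbound
  have hB' : ∀ S i, ∀ x ∈ designSpace A b S, ∑ j, v i j * x j ≤ ∑ S, ∑ i, |B S i| :=
    fun S i x hx => calc
      _ ≤ |B S i| := (hB S i x hx).trans (le_abs_self _)
      _ ≤ ∑ i, |B S i| := single_le_sum (f := fun i => |B S i|)
        (fun _ _ => abs_nonneg _) (mem_univ i)
      _ ≤ _ := single_le_sum (f := fun S => ∑ i, |B S i|)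
        (fun _ _ => sum_nonneg fun _ _ => abs_nonneg _) (mem_univ S)
  obtain ⟨u, hu, hcore⟩ := exists_core_point_of_balanced hcont
    (fun S u t => eq_of_forall_le_iff fun r => by
      rw [le_sub_iff_add_le, hh, hh]
      simp only [add_assoc, add_comm t r])
    (fun S u hu i hi => by
      obtain ⟨x, hx, hxu⟩ := (hh0 S u).1 hu
      exact (hxu i hi).trans (hB' S.1 i x hx))
    (fun i u => (hh _ _ _).2 (by
      obtain ⟨x, hx⟩ := hne i
      refine ⟨x, hx, fun k hk => ?_⟩
      obtain rfl := mem_singleton.1 hk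
      simpa using hv k {k} (singleton_nonempty k) x hx))
    (fun w hw hsum u hu => by
      rw [hh0]
      have hex : ∀ S : {S : Finset N // S.Nonempty}, ∃ x ∈ designSpace A b S.1,
          0 < w S → ∀ i ∈ S.1, u i ≤ ∑ j, v i j * x j := fun S => by
        by_cases hS : 0 < w S
        · obtain ⟨x, hx, hxu⟩ := (hh0 S u).1 (hu S hS)
          exact ⟨x, hx, fun _ => hxu⟩
        · obtain ⟨x, hx⟩ := designSpace_nonempty hne S.1
          exact ⟨x, hx, fun h => absurd h hS⟩
      choose x hx hxu using hex
      refine ⟨_, sum_mem_designSpace (s := univ) (fun S _ => hw S) (fun S _ => hx S) fun k => ?_,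
        fun i _ => ?_⟩
      · have h1 : ∀ S : {S : Finset N // S.Nonempty}, w S * ∑ i ∈ S.1, b i k =
            ∑ i, (if i ∈ S.1 then w S else 0) * b i k := fun S => by
          simp [mul_sum, ite_mul, sum_ite_mem]
        simp only [h1]
        rw [sum_comm]
        refine sum_congr rfl fun i _ => ?_
        rw [← sum_mul, hsum i, one_mul]
      · calc u i = ∑ S, (if i ∈ S.1 then w S else 0) * u i := by rw [← sum_mul, hsum i, one_mul]
          _ ≤ ∑ S, w S * ∑ j, v i j * x S j := sum_le_sum fun S _ => by
            have hvx := hv i S.1 S.2 _ (hx S)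
            split_ifs with hi
            · obtain h0 | h0 := (hw S).eq_or_lt
              · simp [← h0]
              · exact mul_le_mul_of_nonneg_left (hxu S h0 i hi) (hw S)
            · rw [zero_mul]
              exact mul_nonneg (hw S) hvx
          _ = _ := by
            simp only [mul_sum]
            rw [sum_comm]
            exact sum_congr rfl fun j _ => sum_congr rfl fun S _ => by ring)
  refine ⟨u, (hh0 ⟨univ, univ_nonempty⟩ u).1 hu, ?_⟩
  simp only [Set.mem_iUnion, not_exists]
  intro S hS hint
  have htend : Filter.Tendsto (fun (t : ℝ) (i : N) => u i + t) (nhds 0) (nhds u) := by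
    have : Continuous fun (t : ℝ) (i : N) => u i + t := by fun_prop
    simpa using this.tendsto 0
  have hev := (htend.eventually (mem_interior_iff_mem_nhds.1 hint)).filter_mono
    (nhdsWithin_le_nhds (s := Set.Ioi 0))
  obtain ⟨t, ht, ht0⟩ := (hev.and self_mem_nhdsWithin).exists
  have h1 := (hh ⟨S, hS⟩ u t).2 ht
  have h2 : 0 < t := ht0
  linarith [hcore ⟨S, hS⟩]
end

section
/- Consider the NTU LP game with players N = {1, 2, 3}, goods J = {1, 2}, a single resource K = {1}, production matrix A = (1 1), endowments b^1 = b^2 = b^3 = 1, and valuations v^1 = v^2 = (2/3, 1/3)ᵀ and v^3 = (−2/3, 1/3)ᵀ. Then the core of this game is empty: C(N) = ∅. -/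
open Finset

/-- A profile that some design of `S` strictly improves for every member of `S` lies in the
interior of the utility space of `S`. -/
theorem mem_interior_utilitySpace {K J N : Type*} [Fintype J] {A : K → J → ℝ}
    {b : N → K → ℝ} {v : N → J → ℝ} {S : Finset N} {u : N → ℝ} {x : J → ℝ}
    (hx : x ∈ designSpace A b S) (hu : ∀ i ∈ S, u i < ∑ j, v i j * x j) :
    u ∈ interior (utilitySpace A b v S) := by
  refine mem_interior.2 ⟨⋂ i ∈ S, {w : N → ℝ | w i < ∑ j, v i j * x j}, ?_, ?_, ?_⟩
  · intro w hw
    simp only [Set.mem_iInter, Set.mem_ofPred_eq] at hw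
    exact ⟨x, hx, fun i hi => (hw i hi).le⟩
  · exact isOpen_biInter_finset fun i _ => isOpen_lt (continuous_apply i) continuous_const
  · simpa only [Set.mem_iInter, Set.mem_ofPred_eq] using hu

/-- The NTU LP game with three players, two goods, a single resource,
`A = (1 1)`, `b¹ = b² = b³ = 1`, `v¹ = v² = (2/3, 1/3)ᵀ`, `v³ = (-2/3, 1/3)ᵀ`
has an empty core. -/
theorem ntulp_example_core_empty :
    core (fun (_ : Fin 1) (_ : Fin 2) => (1 : ℝ))
      (fun (_ : Fin 3) (_ : Fin 1) => (1 : ℝ))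
      ![![2/3, 1/3], ![2/3, 1/3], ![-2/3, 1/3]] = ∅ := by
  refine Set.eq_empty_iff_forall_notMem.2 ?_
  rintro u ⟨⟨x, ⟨_, hxb⟩, hu⟩, hcore⟩
  simp only [Set.mem_iUnion, not_exists] at hcore
  have hb := hxb 0
  have hu0 := hu 0 (Finset.mem_univ _)
  have hu1 := hu 1 (Finset.mem_univ _)
  have hu2 := hu 2 (Finset.mem_univ _)
  simp [Fin.sum_univ_two] at hb hu0 hu1 hu2
  have h3 : 1 / 3 ≤ u 2 := by
    by_contra! h
    refine hcore {2} (by simp) (mem_interior_utilitySpace (x := ![0, 1]) ⟨?_, ?_⟩ ?_)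
    · simp [Fin.forall_fin_two]
    · simp [Fin.sum_univ_two]
    · simpa [Fin.sum_univ_two] using h
  refine hcore {0, 1} (by simp) (mem_interior_utilitySpace (x := ![2, 0]) ⟨?_, ?_⟩ ?_)
  · simp [Fin.forall_fin_two]
  · simp [Fin.sum_univ_two]
  · simp [Fin.sum_univ_two]
    constructor <;> linarith
end
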